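/- Let V be an n-dimensional complex vector space and k ≤ n/2. The fibre product T*Gr(k,V) ×_{X₀} T*Gr(V,k) over the common affine contraction X₀ (the variety of square-zero endomorphisms of V of rank ≤ k) has k+1 irreducible components Z₀, ..., Z_k, where Z_i = {(x₁, y₂, a) : rank(a) ≤ k-i, nullity(y₂ x₁) ≥ k-i} inside the correspondence variety of triples (x₁: S₁ ↪ V, y₂: V ↠ S₂, a: S₂ → S₁). -/

import Mathlib

noncomputable section

variable (n k : ℕ)

/-- Triples `(x₁ : S₁ → V, y₂ : V → S₂, a : S₂ → S₁)` with `dim Sᵢ = k`, `dim V = n`. -/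
abbrev Pt15 := Matrix (Fin n) (Fin k) ℂ × Matrix (Fin k) (Fin n) ℂ ×
  Matrix (Fin k) (Fin k) ℂ

abbrev Idx15 := (Fin n × Fin k) ⊕ (Fin k × Fin n) ⊕ (Fin k × Fin k)

def coords15 (t : Pt15 n k) : Idx15 n k → ℂ :=
  Sum.elim (fun ij => t.1 ij.1 ij.2)
    (Sum.elim (fun ij => t.2.1 ij.1 ij.2) (fun ij => t.2.2 ij.1 ij.2))

def VanishOn15 (f : MvPolynomial (Idx15 n k) ℂ) (S : Set (Pt15 n k)) : Prop :=
  ∀ t ∈ S, MvPolynomial.eval (coords15 n k t) f = 0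

/-- The fibre product `T*Gr(k,V) ×_{X₀} T*Gr(V,k)`, realized inside the
correspondence of triples `(x₁ injective, y₂ surjective, a)` by the equations
`a y₂ x₁ = 0 = y₂ x₁ a`. -/
def FibProd : Set (Pt15 n k) :=
  {t | Function.Injective t.1.mulVecLin ∧ Function.Surjective t.2.1.mulVecLin ∧
    t.2.2 * (t.2.1 * t.1) = 0 ∧ (t.2.1 * t.1) * t.2.2 = 0}

/-- The component `Z_i = {rank a ≤ k - i, nullity (y₂x₁) ≥ k - i}`; by rank–nullity
the latter is `rank (y₂x₁) ≤ i`. -/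
def Z15 (i : ℕ) : Set (Pt15 n k) :=
  {t ∈ FibProd n k | t.2.2.rank ≤ k - i ∧ (t.2.1 * t.1).rank ≤ i}

/-! ### Linear algebra -/

lemma aux_between {V : Type*} [AddCommGroup V] [Module ℂ V] [FiniteDimensional ℂ V]
    (U : Submodule ℂ V) (i : ℕ) (hU : i ≤ Module.finrank ℂ U) :
    ∀ (d : ℕ) (W : Submodule ℂ V), W ≤ U → Module.finrank ℂ W + d = i →
      ∃ W' : Submodule ℂ V, W ≤ W' ∧ W' ≤ U ∧ Module.finrank ℂ W' = i := by
  intro d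
  induction d with
  | zero => intro W hW h; exact ⟨W, le_rfl, hW, by omega⟩
  | succ d ih =>
    intro W hW h
    have hlt : W < U := by
      refine lt_of_le_of_ne hW ?_
      rintro rfl
      omega
    obtain ⟨v, hvU, hvW⟩ := SetLike.exists_of_lt hlt
    have h1 : Module.finrank ℂ (W ⊔ Submodule.span ℂ {v} : Submodule ℂ V)
        ≤ Module.finrank ℂ W + 1 := by
      refine (Submodule.finrank_add_le_finrank_add_finrank _ _).trans ?_
      have := finrank_span_le_card (R := ℂ) ({v} : Set V)
      simp only [Set.toFinset_singleton, Finset.card_singleton] at this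
      omega
    have h2 : Module.finrank ℂ W <
        Module.finrank ℂ (W ⊔ Submodule.span ℂ {v} : Submodule ℂ V) := by
      apply Submodule.finrank_lt_finrank_of_lt
      refine lt_of_le_of_ne le_sup_left ?_
      intro he
      apply hvW
      rw [he]
      exact Submodule.mem_sup_right (Submodule.mem_span_singleton_self v)
    obtain ⟨W', a, b, c⟩ := ih (W ⊔ Submodule.span ℂ {v})
      (sup_le hW (by simpa using hvU)) (by omega)
    exact ⟨W', le_sup_left.trans a, b, c⟩

lemma aux_equiv_matrix {m : ℕ} (e : (Fin m → ℂ) ≃ₗ[ℂ] (Fin m → ℂ)) :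
    ∃ h : Matrix (Fin m) (Fin m) ℂ, IsUnit h.det ∧ ∀ v, h.mulVec v = e v := by
  refine ⟨LinearMap.toMatrix' (e : (Fin m → ℂ) →ₗ[ℂ] (Fin m → ℂ)), ?_, ?_⟩
  · rw [← Matrix.isUnit_iff_isUnit_det, LinearMap.isUnit_toMatrix'_iff]
    exact ⟨LinearMap.GeneralLinearGroup.ofLinearEquiv e, rfl⟩
  · intro v
    rw [← Matrix.toLin'_apply]
    simp

lemma aux_extend {m k : ℕ} (E x : Matrix (Fin m) (Fin k) ℂ)
    (hE : Function.Injective E.mulVecLin) (hx : Function.Injective x.mulVecLin) :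
    ∃ g : Matrix (Fin m) (Fin m) ℂ, IsUnit g.det ∧ g * E = x := by
  let e1 := LinearEquiv.ofInjective _ hE
  let e2 := LinearEquiv.ofInjective _ hx
  obtain ⟨g, hg⟩ := Submodule.exists_linearEquiv_restrict_eq (e1.symm.trans e2)
  obtain ⟨h, hu, hh⟩ := aux_equiv_matrix g
  refine ⟨h, hu, ?_⟩
  apply Matrix.ext_of_mulVec_single
  intro j
  rw [← Matrix.mulVec_mulVec, hh]
  have := hg (e1 (Pi.single j 1))
  simp only [LinearEquiv.trans_apply, LinearEquiv.symm_apply_apply] at this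
  simpa [e1, e2] using this.symm

lemma aux_normal {k : ℕ} (a B P : Matrix (Fin k) (Fin k) ℂ) (hP : P * P = P) (i : ℕ)
    (hPi : P.rank = i) (hB : B.rank ≤ i) (ha : a.rank ≤ k - i) (haB : a * B = 0) :
    ∃ h : Matrix (Fin k) (Fin k) ℂ, IsUnit h.det ∧ a * h * P = 0 ∧
      P * (h⁻¹ * B) = h⁻¹ * B := by
  have hik : i ≤ k := by
    rw [← hPi]; exact P.rank_le_width
  have hker : i ≤ Module.finrank ℂ (LinearMap.ker a.mulVecLin) := by
    have := LinearMap.finrank_range_add_finrank_ker a.mulVecLin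
    simp only [Module.finrank_fin_fun] at this
    unfold Matrix.rank at ha
    omega
  have hle : LinearMap.range B.mulVecLin ≤ LinearMap.ker a.mulVecLin := by
    rintro _ ⟨v, rfl⟩
    simp [haB]
  obtain ⟨W, hW1, hW2, hW3⟩ := aux_between _ i hker (i - B.rank) _ hle (by
    change B.rank + _ = _; omega)
  have e : LinearMap.range P.mulVecLin ≃ₗ[ℂ] W :=
    LinearEquiv.ofFinrankEq _ _ (by rw [hW3]; exact hPi)
  obtain ⟨g, hg⟩ := Submodule.exists_linearEquiv_restrict_eq e
  obtain ⟨h, hu, hh⟩ := aux_equiv_matrix g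
  refine ⟨h, hu, ?_, ?_⟩
  · apply Matrix.ext_of_mulVec_single
    intro j
    rw [Matrix.mul_assoc, ← Matrix.mulVec_mulVec, ← Matrix.mulVec_mulVec, hh]
    have h1 := hg ⟨P.mulVec (Pi.single j 1), ⟨_, rfl⟩⟩
    simp only at h1
    rw [← h1]
    have := hW2 (e ⟨P.mulVec (Pi.single j 1), ⟨_, rfl⟩⟩).2
    rw [LinearMap.mem_ker, Matrix.mulVecLin_apply] at this
    rw [this, Matrix.zero_mulVec]
  · apply Matrix.ext_of_mulVec_single
    intro j
    have hb : B.mulVec (Pi.single j 1) ∈ W := hW1 ⟨_, rfl⟩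
    obtain ⟨⟨_, v, rfl⟩, hv⟩ := e.surjective ⟨_, hb⟩
    have h1 := hg ⟨P.mulVecLin v, ⟨v, rfl⟩⟩
    rw [hv] at h1
    simp only [Matrix.mulVecLin_apply] at h1
    rw [← hh] at h1
    rw [← Matrix.mulVec_mulVec, ← Matrix.mulVec_mulVec, h1, Matrix.mulVec_mulVec _ h⁻¹ h,
      Matrix.nonsing_inv_mul _ hu, Matrix.one_mulVec, Matrix.mulVec_mulVec, hP]

/-! ### Polynomial functions of one variable -/

def IsP15 (h : ℂ → ℂ) : Prop := ∃ P : Polynomial ℂ, ∀ t, h t = P.eval t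

lemma IsP15.const (c : ℂ) : IsP15 (fun _ => c) := ⟨Polynomial.C c, by simp⟩
lemma IsP15.id : IsP15 (fun t => t) := ⟨Polynomial.X, by simp⟩
lemma IsP15.add {f g : ℂ → ℂ} (hf : IsP15 f) (hg : IsP15 g) : IsP15 (fun t => f t + g t) := by
  obtain ⟨P, hP⟩ := hf
  obtain ⟨Q, hQ⟩ := hg
  exact ⟨P + Q, by simp [hP, hQ]⟩
lemma IsP15.mul {f g : ℂ → ℂ} (hf : IsP15 f) (hg : IsP15 g) : IsP15 (fun t => f t * g t) := by
  obtain ⟨P, hP⟩ := hf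
  obtain ⟨Q, hQ⟩ := hg
  exact ⟨P * Q, by simp [hP, hQ]⟩
lemma IsP15.sum {ι : Type*} (s : Finset ι) {f : ι → ℂ → ℂ} (hf : ∀ i, IsP15 (f i)) :
    IsP15 (fun t => ∑ i ∈ s, f i t) := by
  choose P hP using hf
  exact ⟨∑ i ∈ s, P i, by simp [hP, Polynomial.eval_finsetSum]⟩
lemma IsP15.prod {ι : Type*} (s : Finset ι) {f : ι → ℂ → ℂ} (hf : ∀ i, IsP15 (f i)) :
    IsP15 (fun t => ∏ i ∈ s, f i t) := by
  choose P hP using hf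
  exact ⟨∏ i ∈ s, P i, by simp [hP, Polynomial.eval_prod]⟩

lemma IsP15.common {f₁ f₂ f₃ f₄ : ℂ → ℂ} (h₁ : IsP15 f₁) (h₂ : IsP15 f₂) (h₃ : IsP15 f₃)
    (h₄ : IsP15 f₄) (n₁ : ∃ t, f₁ t ≠ 0) (n₂ : ∃ t, f₂ t ≠ 0) (n₃ : ∃ t, f₃ t ≠ 0)
    (n₄ : ∃ t, f₄ t ≠ 0) : ∃ t, f₁ t ≠ 0 ∧ f₂ t ≠ 0 ∧ f₃ t ≠ 0 ∧ f₄ t ≠ 0 := by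
  have key : ∀ {f : ℂ → ℂ} {P : Polynomial ℂ}, (∀ t, f t = P.eval t) → (∃ t, f t ≠ 0) →
      P ≠ 0 := by
    rintro f P h ⟨t, ht⟩ rfl
    simp [h] at ht
  obtain ⟨P₁, e₁⟩ := h₁
  obtain ⟨P₂, e₂⟩ := h₂
  obtain ⟨P₃, e₃⟩ := h₃
  obtain ⟨P₄, e₄⟩ := h₄
  have hne : P₁ * P₂ * P₃ * P₄ ≠ 0 :=
    mul_ne_zero (mul_ne_zero (mul_ne_zero (key e₁ n₁) (key e₂ n₂)) (key e₃ n₃)) (key e₄ n₄)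
  by_contra! hcon
  apply hne
  apply Polynomial.funext
  intro t
  simp only [Polynomial.eval_mul, ← e₁, ← e₂, ← e₃, ← e₄, Polynomial.eval_zero]
  have := hcon t
  by_cases c1 : f₁ t = 0
  · simp [c1]
  by_cases c2 : f₂ t = 0
  · simp [c2]
  by_cases c3 : f₃ t = 0
  · simp [c3]
  simp [this c1 c2 c3]

def IsPM15 {a b : ℕ} (M : ℂ → Matrix (Fin a) (Fin b) ℂ) : Prop :=
  ∀ i j, IsP15 (fun t => M t i j)

lemma IsPM15.const {a b : ℕ} (M : Matrix (Fin a) (Fin b) ℂ) : IsPM15 (fun _ => M) :=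
  fun _ _ => IsP15.const _
lemma IsPM15.line {a b : ℕ} (M N : Matrix (Fin a) (Fin b) ℂ) :
    IsPM15 (fun t => M + t • (N - M)) := by
  intro i j
  simp only [Matrix.add_apply, Matrix.smul_apply, smul_eq_mul]
  exact (IsP15.const _).add (IsP15.id.mul (IsP15.const _))
lemma IsPM15.add {a b : ℕ} {M N : ℂ → Matrix (Fin a) (Fin b) ℂ} (hM : IsPM15 M)
    (hN : IsPM15 N) : IsPM15 (fun t => M t + N t) :=
  fun i j => (hM i j).add (hN i j)
lemma IsPM15.mul {a b c : ℕ} {M : ℂ → Matrix (Fin a) (Fin b) ℂ}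
    {N : ℂ → Matrix (Fin b) (Fin c) ℂ} (hM : IsPM15 M)
    (hN : IsPM15 N) : IsPM15 (fun t => M t * N t) := by
  intro i j
  simp only [Matrix.mul_apply]
  exact IsP15.sum _ fun l => (hM i l).mul (hN l j)
lemma IsPM15.det {a : ℕ} {M : ℂ → Matrix (Fin a) (Fin a) ℂ} (hM : IsPM15 M) :
    IsP15 (fun t => (M t).det) := by
  simp only [Matrix.det_apply']
  exact IsP15.sum _ fun σ => (IsP15.const _).mul (IsP15.prod _ fun i => hM _ _)
lemma IsPM15.adjugate {a : ℕ} {M : ℂ → Matrix (Fin a) (Fin a) ℂ} (hM : IsPM15 M) :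
    IsPM15 (fun t => (M t).adjugate) := by
  intro i j
  simp only [Matrix.adjugate_apply]
  apply IsPM15.det
  intro r s
  by_cases h : r = j
  · subst h
    simp only [Matrix.updateRow_self]
    exact IsP15.const _
  · simp only [Matrix.updateRow_ne h]
    exact hM r s

lemma IsP15.mvEval {σ : Type*} (f : MvPolynomial σ ℂ) {c : ℂ → σ → ℂ}
    (hc : ∀ s, IsP15 (fun t => c t s)) : IsP15 (fun t => MvPolynomial.eval (c t) f) := by
  induction f using MvPolynomial.induction_on with
  | C a => simpa using IsP15.const a
  | add p q hp hq => simpa using hp.add hq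
  | mul_X p s hp => simpa using hp.mul (hc s)

/-! ### The parametrization -/

/-- The projection onto the first `i` coordinates. -/
def P15 (i : ℕ) : Matrix (Fin k) (Fin k) ℂ :=
  Matrix.diagonal fun j => if j.1 < i then 1 else 0

/-- The projection onto the last `k - i` coordinates. -/
def Q15 (i : ℕ) : Matrix (Fin k) (Fin k) ℂ :=
  Matrix.diagonal fun j => if j.1 < i then 0 else 1

/-- The embedding of `ℂ^k` in `ℂ^n` starting at coordinate `s`. -/
def E15 (s : ℕ) : Matrix (Fin n) (Fin k) ℂ :=
  Matrix.of fun a b => if a.1 = s + b.1 then 1 else 0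

lemma P15_sq (i : ℕ) : P15 k i * P15 k i = P15 k i := by
  simp [P15, Matrix.diagonal_mul_diagonal]
lemma Q15_sq (i : ℕ) : Q15 k i * Q15 k i = Q15 k i := by
  simp [Q15, Matrix.diagonal_mul_diagonal]
lemma P15_Q15 (i : ℕ) : P15 k i * Q15 k i = 0 := by
  simp only [P15, Q15, Matrix.diagonal_mul_diagonal]
  rw [← Matrix.diagonal_zero]
  congr 1
  funext j
  split_ifs <;> simp
lemma Q15_P15 (i : ℕ) : Q15 k i * P15 k i = 0 := by
  simp only [P15, Q15, Matrix.diagonal_mul_diagonal]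
  rw [← Matrix.diagonal_zero]
  congr 1
  funext j
  split_ifs <;> simp
lemma P15_add_Q15 (i : ℕ) : P15 k i + Q15 k i = 1 := by
  simp only [P15, Q15, Matrix.diagonal_add]
  rw [← Matrix.diagonal_one]
  congr 1
  funext j
  split_ifs <;> simp

lemma P15_rank (i : ℕ) (hi : i ≤ k) : (P15 k i).rank = i := by
  classical
  rw [P15, Matrix.rank_diagonal, Fintype.card_subtype]
  have : (Finset.univ.filter fun j : Fin k => (if j.1 < i then (1 : ℂ) else 0) ≠ 0)
      = Finset.univ.filter fun j : Fin k => j.1 < i := by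
    ext j; simp
  rw [this, Fin.card_filter_val_lt]
  omega

lemma Q15_rank (i : ℕ) (hi : i ≤ k) : (Q15 k i).rank = k - i := by
  classical
  rw [Q15, Matrix.rank_diagonal, Fintype.card_subtype]
  have : (Finset.univ.filter fun j : Fin k => (if j.1 < i then (0 : ℂ) else 1) ≠ 0)
      = (Finset.univ.filter fun j : Fin k => j.1 < i)ᶜ := by
    ext j; simp
  rw [this, Finset.card_compl, Fin.card_filter_val_lt, Fintype.card_fin]
  omega

lemma E15_mul_self (s : ℕ) (hs : s + k ≤ n) : (E15 n k s).transpose * E15 n k s = 1 := by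
  ext a b
  rw [Matrix.mul_apply, Finset.sum_eq_single (⟨s + a.1, by omega⟩ : Fin n)]
  · simp [E15, Matrix.one_apply, Fin.ext_iff]
  · intro c _ hc
    have : ¬ c.1 = s + a.1 := fun h => hc (Fin.ext h)
    simp [E15, this]
  · simp

lemma E15_orth : (E15 n k k).transpose * E15 n k 0 = 0 := by
  ext a b
  rw [Matrix.mul_apply]
  apply Finset.sum_eq_zero
  intro c _
  simp only [E15, Matrix.transpose_apply, Matrix.of_apply]
  split_ifs <;> first | omega | simp

lemma E15_orth' : (E15 n k 0).transpose * E15 n k k = 0 := by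
  have := congrArg Matrix.transpose (E15_orth n k)
  simpa using this

/-- The middle matrix `B`. -/
def B15 (i : ℕ) (h₁ h₂ B : Matrix (Fin k) (Fin k) ℂ) : Matrix (Fin k) (Fin k) ℂ :=
  h₂ * (P15 k i * B * P15 k i) * h₁.adjugate

def A15 (i : ℕ) (h₁ h₂ A : Matrix (Fin k) (Fin k) ℂ) : Matrix (Fin k) (Fin k) ℂ :=
  h₁ * (Q15 k i * A * Q15 k i) * h₂.adjugate

def Y15 (B : Matrix (Fin k) (Fin k) ℂ) (g : Matrix (Fin n) (Fin n) ℂ)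
    (C : Matrix (Fin k) (Fin n) ℂ) : Matrix (Fin k) (Fin n) ℂ :=
  (B * (E15 n k 0).transpose + C * (1 - E15 n k 0 * (E15 n k 0).transpose)) * g.adjugate

def phi15 (i : ℕ) (g : Matrix (Fin n) (Fin n) ℂ) (h₁ h₂ A B : Matrix (Fin k) (Fin k) ℂ)
    (C : Matrix (Fin k) (Fin n) ℂ) : Pt15 n k :=
  (g * E15 n k 0, Y15 n k (B15 k i h₁ h₂ B) g C, A15 k i h₁ h₂ A)

lemma Y15_mul (hkn : k ≤ n) (B : Matrix (Fin k) (Fin k) ℂ) (g : Matrix (Fin n) (Fin n) ℂ)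
    (C : Matrix (Fin k) (Fin n) ℂ) : Y15 n k B g C * (g * E15 n k 0) = g.det • B := by
  have hE := E15_mul_self n k 0 (by omega)
  rw [Y15, Matrix.mul_assoc, ← Matrix.mul_assoc _ g, Matrix.adjugate_mul, Matrix.smul_mul,
    Matrix.one_mul, Matrix.mul_smul, Matrix.add_mul, Matrix.mul_assoc B, hE, Matrix.mul_assoc C,
    Matrix.sub_mul, Matrix.mul_assoc _ _ (E15 n k 0), hE]
  simp

lemma A15_mul_B15 (i : ℕ) (h₁ h₂ A B : Matrix (Fin k) (Fin k) ℂ) :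
    A15 k i h₁ h₂ A * B15 k i h₁ h₂ B = 0 := by
  have : A15 k i h₁ h₂ A * B15 k i h₁ h₂ B = h₁ * (Q15 k i * A * (Q15 k i *
      (h₂.adjugate * h₂) * P15 k i) * B * P15 k i) * h₁.adjugate := by
    simp only [A15, B15, Matrix.mul_assoc]
  rw [this, Matrix.adjugate_mul]
  simp [Q15_P15]

lemma B15_mul_A15 (i : ℕ) (h₁ h₂ A B : Matrix (Fin k) (Fin k) ℂ) :
    B15 k i h₁ h₂ B * A15 k i h₁ h₂ A = 0 := by
  have : B15 k i h₁ h₂ B * A15 k i h₁ h₂ A = h₂ * (P15 k i * B * (P15 k i *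
      (h₁.adjugate * h₁) * Q15 k i) * A * Q15 k i) * h₂.adjugate := by
    simp only [A15, B15, Matrix.mul_assoc]
  rw [this, Matrix.adjugate_mul]
  simp [P15_Q15]

lemma A15_rank (i : ℕ) (hi : i ≤ k) (h₁ h₂ A : Matrix (Fin k) (Fin k) ℂ) :
    (A15 k i h₁ h₂ A).rank ≤ k - i := by
  rw [A15]
  refine (Matrix.rank_mul_le_left _ _).trans ((Matrix.rank_mul_le_right _ _).trans ?_)
  exact (Matrix.rank_mul_le_right _ _).trans (Q15_rank k i hi).le

lemma B15_rank (i : ℕ) (hi : i ≤ k) (h₁ h₂ A : Matrix (Fin k) (Fin k) ℂ) :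
    (B15 k i h₁ h₂ A).rank ≤ i := by
  rw [B15]
  refine (Matrix.rank_mul_le_left _ _).trans ((Matrix.rank_mul_le_right _ _).trans ?_)
  exact (Matrix.rank_mul_le_right _ _).trans (P15_rank k i hi).le

lemma phi15_mem (hkn : k ≤ n) (i : ℕ) (hi : i ≤ k) (g : Matrix (Fin n) (Fin n) ℂ)
    (h₁ h₂ A B : Matrix (Fin k) (Fin k) ℂ) (C : Matrix (Fin k) (Fin n) ℂ)
    (hinj : Function.Injective (phi15 n k i g h₁ h₂ A B C).1.mulVecLin)
    (hsur : Function.Surjective (phi15 n k i g h₁ h₂ A B C).2.1.mulVecLin) :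
    phi15 n k i g h₁ h₂ A B C ∈ Z15 n k i := by
  refine ⟨⟨hinj, hsur, ?_, ?_⟩, ?_, ?_⟩
  · simp only [phi15, Y15_mul n k hkn, Matrix.mul_smul, A15_mul_B15, smul_zero]
  · simp only [phi15, Y15_mul n k hkn, Matrix.smul_mul, B15_mul_A15, smul_zero]
  · exact A15_rank k i hi _ _ _
  · simp only [phi15, Y15_mul n k hkn]
    rw [← Matrix.mul_one (B15 k i h₁ h₂ B), ← Matrix.mul_smul]
    exact (Matrix.rank_mul_le_left _ _).trans (B15_rank k i hi _ _ _)

lemma aux_block (h h' a P P' : Matrix (Fin k) (Fin k) ℂ) (hu : IsUnit h.det)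
    (hu' : IsUnit h'.det) (e1 : P * (h⁻¹ * a) = h⁻¹ * a)
    (e2 : a * h' * P' = a * h') :
    ∃ A, a = h * (P * A * P') * h'.adjugate := by
  refine ⟨h'.det⁻¹ • (h⁻¹ * a * h'), ?_⟩
  have e3 : P * (h⁻¹ * a * h') * P' = h⁻¹ * a * h' := by
    rw [← Matrix.mul_assoc, e1, Matrix.mul_assoc h⁻¹, Matrix.mul_assoc h⁻¹, e2]
  have e4 : h * (P * (h'.det⁻¹ • (h⁻¹ * a * h')) * P') * h'.adjugate =
      h'.det⁻¹ • (h * (P * (h⁻¹ * a * h') * P') * h'.adjugate) := by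
    simp only [Matrix.mul_smul, Matrix.smul_mul]
  rw [e4, e3, Matrix.mul_assoc, Matrix.mul_assoc (h⁻¹ * a), Matrix.mul_adjugate,
    Matrix.mul_smul, Matrix.mul_smul, smul_smul, inv_mul_cancel₀ hu'.ne_zero, one_smul,
    Matrix.mul_one, ← Matrix.mul_assoc, Matrix.mul_nonsing_inv _ hu, Matrix.one_mul]

lemma phi15_surj (hkn : k ≤ n) (i : ℕ) (hi : i ≤ k) (t : Pt15 n k) (ht : t ∈ Z15 n k i) :
    ∃ g h₁ h₂ A B C, t = phi15 n k i g h₁ h₂ A B C := by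
  obtain ⟨x, y, a⟩ := t
  obtain ⟨⟨hx, hy, h1, h2⟩, h3, h4⟩ := ht
  simp only at hx hy h1 h2 h3 h4
  have hE := E15_mul_self n k 0 (by omega)
  have hEinj : Function.Injective (E15 n k 0).mulVecLin := by
    intro u v huv
    have := congrArg (E15 n k 0).transpose.mulVec huv
    simpa [hE] using this
  obtain ⟨g, hgu, hg⟩ := aux_extend (E15 n k 0) x hEinj hx
  set d := g.det⁻¹ with hd
  have hd0 : g.det ≠ 0 := hgu.ne_zero
  obtain ⟨q, hq, q1, q2⟩ := aux_normal a (y * x) (P15 k i) (P15_sq k i) i (P15_rank k i hi) h4 h3 h1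
  obtain ⟨p, hp, p1, p2⟩ := aux_normal (y * x) a (Q15 k i) (Q15_sq k i) (k - i) (Q15_rank k i hi)
    h3 (by omega) h2
  have q1' : a * q * Q15 k i = a * q := by
    have := congrArg (fun M => a * q * M) (P15_add_Q15 k i)
    simpa [Matrix.mul_add, q1] using this
  have p1' : (y * x) * p * P15 k i = (y * x) * p := by
    have := congrArg (fun M => (y * x) * p * M) (P15_add_Q15 k i)
    simpa [Matrix.mul_add, p1] using this
  obtain ⟨A, hA⟩ := aux_block k p q a _ _ hp hq p2 q1'
  obtain ⟨B, hB⟩ := aux_block k q p (y * x) _ _ hq hp q2 p1'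
  refine ⟨g, p, q, A, d • B, d • (y * g), ?_⟩
  have hB' : B15 k i p q (d • B) = d • (y * x) := by
    rw [hB]
    simp only [B15, Matrix.mul_smul, Matrix.smul_mul]
  have hY : Y15 n k (d • (y * x)) g (d • (y * g)) = y := by
    have : d • (y * x) * (E15 n k 0).transpose +
        d • (y * g) * (1 - E15 n k 0 * (E15 n k 0).transpose) = d • (y * g) := by
      rw [← hg]
      simp only [Matrix.smul_mul, Matrix.mul_sub, Matrix.mul_one, smul_sub, Matrix.mul_assoc]
      abel
    rw [Y15, this, Matrix.smul_mul, Matrix.mul_assoc, Matrix.mul_adjugate, Matrix.mul_smul,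
      smul_smul, hd, inv_mul_cancel₀ hd0, one_smul, Matrix.mul_one]
  simp only [phi15, hB', hY, hg]
  rw [A15, ← hA]

/-- A point of `Z_i` where both ranks are extremal. -/
lemma exists_generic15 (hkn : 2 * k ≤ n) (i : ℕ) (hi : i ≤ k) :
    ∃ t ∈ Z15 n k i, t.2.2.rank = k - i ∧ (t.2.1 * t.1).rank = i := by
  have hE := E15_mul_self n k 0 (by omega)
  have hE' := E15_mul_self n k k (by omega)
  have hB : B15 k i 1 1 1 = P15 k i := by simp [B15, P15_sq]
  have hA : A15 k i 1 1 1 = Q15 k i := by simp [A15, Q15_sq]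
  refine ⟨phi15 n k i 1 1 1 1 1 (E15 n k k).transpose, ?_, ?_, ?_⟩
  · apply phi15_mem n k (by omega) i hi
    · intro u v huv
      have := congrArg (E15 n k 0).transpose.mulVec huv
      simpa [phi15, hE] using this
    · have hY : (phi15 n k i 1 1 1 1 1 (E15 n k k).transpose).2.1 * E15 n k k = 1 := by
        simp only [phi15, Y15, Matrix.adjugate_one, Matrix.mul_one, Matrix.add_mul,
          Matrix.mul_sub, Matrix.sub_mul, Matrix.mul_assoc, E15_orth', hE', Matrix.mul_zero,
          sub_zero, zero_add]
      intro v
      refine ⟨(E15 n k k).mulVec v, ?_⟩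
      rw [Matrix.mulVecLin_apply, Matrix.mulVec_mulVec, hY, Matrix.one_mulVec]
  · simp only [phi15, hA, Q15_rank k i hi]
  · simp only [phi15, Y15_mul n k (show k ≤ n by omega), hB, Matrix.det_one, one_smul,
      P15_rank k i hi]

lemma irred15 (hkn : k ≤ n) (i : ℕ) (hi : i ≤ k) (f g : MvPolynomial (Idx15 n k) ℂ)
    (hfg : VanishOn15 n k (f * g) (Z15 n k i)) :
    VanishOn15 n k f (Z15 n k i) ∨ VanishOn15 n k g (Z15 n k i) := by
  by_contra hcon
  rw [not_or] at hcon
  obtain ⟨hf, hg⟩ := hcon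
  simp only [VanishOn15, not_forall] at hf hg
  obtain ⟨t0, ht0, hf⟩ := hf
  obtain ⟨t1, ht1, hg⟩ := hg
  obtain ⟨g0, p0, q0, A0, B0, C0, rfl⟩ := phi15_surj n k hkn i hi t0 ht0
  obtain ⟨g1, p1, q1, A1, B1, C1, rfl⟩ := phi15_surj n k hkn i hi t1 ht1
  set ψ : ℂ → Pt15 n k := fun t => phi15 n k i (g0 + t • (g1 - g0)) (p0 + t • (p1 - p0))
    (q0 + t • (q1 - q0)) (A0 + t • (A1 - A0)) (B0 + t • (B1 - B0)) (C0 + t • (C1 - C0)) with hψ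
  have hψ0 : ψ 0 = phi15 n k i g0 p0 q0 A0 B0 C0 := by simp [hψ]
  have hψ1 : ψ 1 = phi15 n k i g1 p1 q1 A1 B1 C1 := by simp [hψ]
  rw [← hψ0] at ht0 hf
  rw [← hψ1] at ht1 hg
  have hx : IsPM15 (fun t => (ψ t).1) := (IsPM15.line g0 g1).mul (IsPM15.const _)
  have hb : IsPM15 (fun t => B15 k i (p0 + t • (p1 - p0)) (q0 + t • (q1 - q0))
      (B0 + t • (B1 - B0))) :=
    ((IsPM15.line _ _).mul (((IsPM15.const _).mul (IsPM15.line _ _)).mul (IsPM15.const _))).mul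
      (IsPM15.line _ _).adjugate
  have hy : IsPM15 (fun t => (ψ t).2.1) :=
    ((hb.mul (IsPM15.const _)).add ((IsPM15.line C0 C1).mul (IsPM15.const _))).mul
      (IsPM15.line g0 g1).adjugate
  have ha : IsPM15 (fun t => (ψ t).2.2) :=
    ((IsPM15.line _ _).mul (((IsPM15.const _).mul (IsPM15.line _ _)).mul (IsPM15.const _))).mul
      (IsPM15.line _ _).adjugate
  have hc : ∀ s, IsP15 (fun t => coords15 n k (ψ t) s) := by
    rintro (s | s | s)
    · exact hx _ _
    · exact hy _ _
    · exact ha _ _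
  obtain ⟨L, hL⟩ := LinearMap.exists_leftInverse_of_injective (ψ 0).1.mulVecLin
    (LinearMap.ker_eq_bot.2 ht0.1.1)
  obtain ⟨R, hR⟩ := LinearMap.exists_rightInverse_of_surjective (ψ 0).2.1.mulVecLin
    (LinearMap.range_eq_top.2 ht0.1.2.1)
  have hL' : LinearMap.toMatrix' L * (ψ 0).1 = 1 := by
    have := congrArg LinearMap.toMatrix' hL
    rwa [LinearMap.toMatrix'_comp, ← Matrix.toLin'_apply', LinearMap.toMatrix'_toLin', LinearMap.toMatrix'_id] at this
  have hR' : (ψ 0).2.1 * LinearMap.toMatrix' R = 1 := by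
    have := congrArg LinearMap.toMatrix' hR
    rwa [LinearMap.toMatrix'_comp, ← Matrix.toLin'_apply', LinearMap.toMatrix'_toLin', LinearMap.toMatrix'_id] at this
  obtain ⟨t, e1, e2, e3, e4⟩ := IsP15.common (IsP15.mvEval f hc) (IsP15.mvEval g hc)
    ((IsPM15.const (LinearMap.toMatrix' L)).mul hx).det
    (hy.mul (IsPM15.const (LinearMap.toMatrix' R))).det ⟨0, hf⟩ ⟨1, hg⟩
    ⟨0, by simp [hL']⟩ ⟨0, by simp [hR']⟩
  have hmem : ψ t ∈ Z15 n k i := by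
    apply phi15_mem n k hkn i hi
    · intro u v huv
      have h1 : (LinearMap.toMatrix' L * (ψ t).1).mulVec u =
          (LinearMap.toMatrix' L * (ψ t).1).mulVec v := by
        rw [← Matrix.mulVec_mulVec, ← Matrix.mulVec_mulVec]
        exact congrArg (LinearMap.toMatrix' L).mulVec huv
      exact Matrix.mulVec_injective_of_isUnit
        ((Matrix.isUnit_iff_isUnit_det _).2 (isUnit_iff_ne_zero.2 e3)) h1
    · intro v
      refine ⟨(LinearMap.toMatrix' R).mulVec
        (((ψ t).2.1 * LinearMap.toMatrix' R)⁻¹.mulVec v), ?_⟩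
      change (ψ t).2.1.mulVec _ = v
      rw [Matrix.mulVec_mulVec, Matrix.mulVec_mulVec,
        Matrix.mul_nonsing_inv _ (isUnit_iff_ne_zero.2 e4), Matrix.one_mulVec]
  have := hfg _ hmem
  rw [map_mul] at this
  exact (mul_ne_zero e1 e2) this

/-- for `k ≤ n/2`, the fibre product
`T*Gr(k,V) ×_{X₀} T*Gr(V,k)` has exactly the `k+1` irreducible components
`Z₀, …, Z_k` given by the stated rank conditions: it is their union, each `Z_i` is
nonempty and irreducible, and none is contained in another. -/
theorem stmt15 (hk : 0 < k) (hkn : 2 * k ≤ n) :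
    (FibProd n k = ⋃ i ∈ Finset.range (k + 1), Z15 n k i) ∧
    (∀ i ≤ k, (Z15 n k i).Nonempty ∧
      ∀ f g : MvPolynomial (Idx15 n k) ℂ, VanishOn15 n k (f * g) (Z15 n k i) →
        VanishOn15 n k f (Z15 n k i) ∨ VanishOn15 n k g (Z15 n k i)) ∧
    (∀ i ≤ k, ∀ j ≤ k, i ≠ j → ¬ Z15 n k i ⊆ Z15 n k j) := by
  refine ⟨?_, ?_, ?_⟩
  · ext t
    simp only [Set.mem_iUnion, Finset.mem_range, exists_prop]
    constructor
    · intro ht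
      have h1 := Matrix.rank_add_rank_le_card_of_mul_eq_zero ht.2.2.1
      rw [Fintype.card_fin] at h1
      exact ⟨(t.2.1 * t.1).rank, by omega, ht, by omega, le_rfl⟩
    · rintro ⟨i, _, ht⟩
      exact ht.1
  · intro i hi
    obtain ⟨t, ht, _⟩ := exists_generic15 n k hkn i hi
    exact ⟨⟨t, ht⟩, irred15 n k (by omega) i hi⟩
  · intro i hi j hj hij hsub
    obtain ⟨t, ht, h1, h2⟩ := exists_generic15 n k hkn i hi
    have h3 := (hsub ht).2
    rw [h1, h2] at h3
    omega

end
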